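/- Every 3-chromatic 2K2-free finite simple graph G on n vertices is recolourable; moreover, for every ℓ ≥ χ(G)+1 = 4, any two ℓ-colourings of G are joined in the reconfiguration graph R_ℓ(G) by a path of length at most 14n (so the ℓ-recolouring diameter of G is at most 14n). -/

import Mathlib

/-- A graph is `2K₂`-free if it has no induced subgraph isomorphic to `2K₂`
(two vertex-disjoint edges with no edges between them). -/
def TwoK2Free {V : Type*} (G : SimpleGraph V) : Prop :=
  ¬ ∃ a b c d : V, G.Adj a b ∧ G.Adj c d ∧
      ¬ G.Adj a c ∧ ¬ G.Adj a d ∧ ¬ G.Adj b c ∧ ¬ G.Adj b d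

/-- The reconfiguration graph `R_ℓ(G)` of the `ℓ`-colourings of `G`: vertices are the
proper `ℓ`-colourings of `G`, two colourings being adjacent when they differ in colour
on exactly one vertex. -/
def recolGraph {V : Type*} (G : SimpleGraph V) (ℓ : ℕ) : SimpleGraph (G.Coloring (Fin ℓ)) where
  Adj c₁ c₂ := ∃! v : V, c₁ v ≠ c₂ v
  symm := by
    refine ⟨?_⟩
    rintro c₁ c₂ ⟨v, hv, hu⟩
    exact ⟨v, hv.symm, fun w hw => hu w hw.symm⟩
  loopless := by
    refine ⟨?_⟩
    rintro c ⟨v, hv, -⟩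
    exact hv rfl


section Aux

set_option linter.unusedSectionVars false

open Classical in
/-- Reachability in the reconfiguration graph within `k` steps. -/
def Reach {V : Type*} (G : SimpleGraph V) (ℓ k : ℕ) (c d : G.Coloring (Fin ℓ)) : Prop :=
  ∃ p : (recolGraph G ℓ).Walk c d, p.length ≤ k

variable {V : Type*} {G : SimpleGraph V} {ℓ : ℕ}

lemma Reach.refl (c : G.Coloring (Fin ℓ)) (k : ℕ) : Reach G ℓ k c c := ⟨.nil, by simp⟩

lemma Reach.trans {c d e : G.Coloring (Fin ℓ)} {k m : ℕ} (h : Reach G ℓ k c d)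
    (h' : Reach G ℓ m d e) : Reach G ℓ (k + m) c e := by
  obtain ⟨p, hp⟩ := h
  obtain ⟨q, hq⟩ := h'
  exact ⟨p.append q, by rw [SimpleGraph.Walk.length_append]; omega⟩

lemma Reach.symm {c d : G.Coloring (Fin ℓ)} {k : ℕ} (h : Reach G ℓ k c d) : Reach G ℓ k d c := by
  obtain ⟨p, hp⟩ := h
  exact ⟨p.reverse, by simpa using hp⟩

lemma Reach.mono {c d : G.Coloring (Fin ℓ)} {k m : ℕ} (h : Reach G ℓ k c d) (hk : k ≤ m) :
    Reach G ℓ m c d := by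
  obtain ⟨p, hp⟩ := h
  exact ⟨p, hp.trans hk⟩

open Classical in
/-- recolour all vertices of a finite set `T` with colour `j`. -/
lemma setcol_finset (j : Fin ℓ) (T : Finset V) : ∀ (c : G.Coloring (Fin ℓ)),
    (∀ u v, u ∈ T → G.Adj u v → v ∉ T ∧ c v ≠ j) →
    ∃ c' : G.Coloring (Fin ℓ), (∀ v, v ∈ T → c' v = j) ∧ (∀ v, v ∉ T → c' v = c v) ∧
      Reach G ℓ T.card c c' := by
  induction T using Finset.induction_on with
  | empty => exact fun c _ => ⟨c, by simp, by simp, Reach.refl c _⟩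
  | insert a T ha ih =>
    intro c h
    obtain ⟨c', h1, h2, h3⟩ := ih c (fun u v hu huv => by
      have := h u v (Finset.mem_insert_of_mem hu) huv
      exact ⟨fun hv => this.1 (Finset.mem_insert_of_mem hv), this.2⟩)
    have hnb : ∀ v, G.Adj a v → c' v ≠ j := by
      intro v hv
      have := h a v (Finset.mem_insert_self _ _) hv
      rw [h2 v (fun hv => this.1 (Finset.mem_insert_of_mem hv))]
      exact this.2
    let c'' : G.Coloring (Fin ℓ) := SimpleGraph.Coloring.mk (fun v => if v = a then j else c' v) (by
      intro u v huv
      by_cases hu : u = a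
      · subst hu
        have : v ≠ u := huv.ne'
        simp only [if_true, this, if_false]
        exact (hnb v huv).symm
      · by_cases hv : v = a
        · subst hv
          simp only [if_true, hu, if_false]
          exact hnb u huv.symm
        · simp only [hu, hv, if_false]
          exact c'.valid huv)
    have hc'' : ∀ v, c'' v = if v = a then j else c' v := fun v => rfl
    refine ⟨c'', ?_, ?_, ?_⟩
    · intro v hv
      rw [hc'']
      split_ifs with hva
      · rfl
      · exact h1 v (Finset.mem_of_mem_insert_of_ne hv hva)
    · intro v hv
      rw [Finset.mem_insert, not_or] at hv
      rw [hc'', if_neg hv.1, h2 v hv.2]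
    · rw [Finset.card_insert_of_notMem ha]
      refine h3.trans ?_
      by_cases hj : c' a = j
      · have : c' = c'' := by
          ext v
          rw [hc'']
          split_ifs with hva
          · rw [hva, hj]
          · rfl
        rw [← this]
        exact Reach.refl _ _
      · have : (recolGraph G ℓ).Adj c' c'' := by
          refine ⟨a, ?_, ?_⟩
          · simp only [hc'', if_true]
            exact hj
          · intro w hw
            by_contra hwa
            exact hw (by simp only [hc'', hwa, if_false])
        exact ⟨this.toWalk, by simp⟩

variable [Fintype V]

open Classical in
/-- size of a class of the reference 3-colouring. -/
noncomputable def csize (p : G.Coloring (Fin 3)) (X : Fin 3) : ℕ :=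
  (Finset.univ.filter (fun v => p v = X)).card

/-- three distinct classes -/
def Trip (X Y Z : Fin 3) : Prop := X ≠ Y ∧ X ≠ Z ∧ Y ≠ Z

lemma Trip.cover : ∀ {X Y Z : Fin 3}, Trip X Y Z → ∀ W, W = X ∨ W = Y ∨ W = Z := by
  unfold Trip; decide

lemma csize_sum (p : G.Coloring (Fin 3)) {X Y Z : Fin 3} (h : Trip X Y Z) :
    csize p X + csize p Y + csize p Z = Fintype.card V := by
  classical
  have h1 : Fintype.card V = ∑ W : Fin 3, csize p W := by
    unfold csize
    rw [← Finset.card_univ]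
    convert Finset.card_eq_sum_card_fiberwise (f := fun v => p v) (t := Finset.univ)
      (s := Finset.univ) (by simp)
  have h2 : (Finset.univ : Finset (Fin 3)) = {X, Y, Z} := by
    ext W; simpa using h.cover W
  rw [h1, h2, Finset.sum_insert (by simp [h.1, h.2.1]), Finset.sum_insert (by simp [h.2.2]),
    Finset.sum_singleton, add_assoc]

lemma setcol (p : G.Coloring (Fin 3)) (c : G.Coloring (Fin ℓ)) (X : Fin 3) (T : V → Prop)
    (hT : ∀ v, T v → p v = X) (j : Fin ℓ) (h : ∀ u v, T u → G.Adj u v → c v ≠ j) :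
    ∃ c' : G.Coloring (Fin ℓ), (∀ v, T v → c' v = j) ∧ (∀ v, ¬ T v → c' v = c v) ∧
      Reach G ℓ (csize p X) c c' := by
  classical
  obtain ⟨c', h1, h2, h3⟩ := setcol_finset j (Finset.univ.filter T) c (by
    intro u v hu huv
    simp only [Finset.mem_filter, Finset.mem_univ, true_and] at hu ⊢
    refine ⟨fun hv => ?_, h u v hu huv⟩
    exact p.valid huv ((hT u hu).trans (hT v hv).symm))
  refine ⟨c', by simpa using h1, by simpa using h2, h3.mono ?_⟩
  unfold csize
  apply Finset.card_le_card
  intro v hv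
  simp only [Finset.mem_filter, Finset.mem_univ, true_and] at hv ⊢
  exact hT v hv

/-- `c` is constant on the classes with the given colours. -/
def Mono (p : G.Coloring (Fin 3)) (c : G.Coloring (Fin ℓ)) (X Y Z : Fin 3) (x y z : Fin ℓ) :
    Prop :=
  ∀ v, (p v = X → c v = x) ∧ (p v = Y → c v = y) ∧ (p v = Z → c v = z)

lemma Mono.unique {p : G.Coloring (Fin 3)} {c d : G.Coloring (Fin ℓ)} {X Y Z : Fin 3}
    {x y z : Fin ℓ} (hd : Trip X Y Z) (h : Mono p c X Y Z x y z) (h' : Mono p d X Y Z x y z) :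
    c = d := by
  ext v
  have h1 := h v
  have h2 := h' v
  rcases hd.cover (p v) with e | e | e
  · rw [h1.1 e, h2.1 e]
  · rw [h1.2.1 e, h2.2.1 e]
  · rw [h1.2.2 e, h2.2.2 e]

lemma Mono.move {p : G.Coloring (Fin 3)} {c : G.Coloring (Fin ℓ)} {X Y Z : Fin 3}
    {x y z : Fin ℓ} (hd : Trip X Y Z) (h : Mono p c X Y Z x y z) (x' : Fin ℓ)
    (hy : y ≠ x') (hz : z ≠ x') :
    ∃ c' : G.Coloring (Fin ℓ), Mono p c' X Y Z x' y z ∧ Reach G ℓ (csize p X) c c' := by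
  obtain ⟨c', h1, h2, h3⟩ := setcol p c X (fun v => p v = X) (fun _ h => h) x' (by
    intro u v hu huv
    have hv : p v ≠ X := fun hv => p.valid huv (hu.trans hv.symm)
    rcases hd.cover (p v) with e | e | e
    · exact absurd e hv
    · rwa [(h v).2.1 e]
    · rwa [(h v).2.2 e])
  refine ⟨c', fun v => ⟨h1 v, fun e => ?_, fun e => ?_⟩, h3⟩
  · rw [h2 v (by rw [e]; exact hd.1.symm), (h v).2.1 e]
  · rw [h2 v (by rw [e]; exact hd.2.1.symm), (h v).2.2 e]

lemma Mono.rot {p : G.Coloring (Fin 3)} {c : G.Coloring (Fin ℓ)} {X Y Z : Fin 3}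
    {x y z : Fin ℓ} (h : Mono p c X Y Z x y z) : Mono p c Y Z X y z x :=
  fun v => ⟨(h v).2.1, (h v).2.2, (h v).1⟩

lemma Mono.swap {p : G.Coloring (Fin 3)} {c : G.Coloring (Fin ℓ)} {X Y Z : Fin 3}
    {x y z : Fin ℓ} (h : Mono p c X Y Z x y z) : Mono p c X Z Y x z y :=
  fun v => ⟨(h v).1, (h v).2.2, (h v).2.1⟩

lemma Trip.rot {X Y Z : Fin 3} (h : Trip X Y Z) : Trip Y Z X := ⟨h.2.2, h.1.symm, h.2.1.symm⟩

lemma Trip.swap {X Y Z : Fin 3} (h : Trip X Y Z) : Trip X Z Y := ⟨h.2.1, h.1, h.2.2.symm⟩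

lemma exists_free (hl : 4 ≤ ℓ) (x y z : Fin ℓ) : ∃ f, x ≠ f ∧ y ≠ f ∧ z ≠ f := by
  have : ({x, y, z} : Finset (Fin ℓ)).card < (Finset.univ : Finset (Fin ℓ)).card := by
    have := Finset.card_le_three (a := x) (b := y) (c := z)
    rw [Finset.card_univ, Fintype.card_fin]
    omega
  obtain ⟨f, -, hf⟩ := Finset.exists_mem_notMem_of_card_lt_card this
  simp only [Finset.mem_insert, Finset.mem_singleton, not_or] at hf
  exact ⟨f, Ne.symm hf.1, Ne.symm hf.2.1, Ne.symm hf.2.2⟩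

lemma rename_two (hl : 4 ≤ ℓ) {p : G.Coloring (Fin 3)} {c d : G.Coloring (Fin ℓ)} {X Y Z : Fin 3}
    {x y z y' z' : Fin ℓ} (hd : Trip X Y Z) (h : Mono p c X Y Z x y z)
    (h' : Mono p d X Y Z x y' z')
    (hxy : x ≠ y) (hxz : x ≠ z) (hxy' : x ≠ y') (hxz' : x ≠ z') (hyz' : y' ≠ z') :
    Reach G ℓ (2 * csize p Y + csize p Z) c d := by
  obtain ⟨f, hf1, hf2, hf3⟩ : ∃ f, x ≠ f ∧ z ≠ f ∧ z' ≠ f := exists_free hl x z z'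
  obtain ⟨c1, m1, r1⟩ := Mono.move hd.rot h.rot f hf2 hf1
  obtain ⟨c2, m2, r2⟩ := Mono.move hd.rot.rot m1.rot z' hxz' hf3.symm
  obtain ⟨c3, m3, r3⟩ := Mono.move hd.rot m2.rot.rot y' hyz'.symm hxy'
  have : c3 = d := Mono.unique hd m3.rot.rot h'
  subst this
  exact ((r1.trans r2).trans r3).mono (by omega)

lemma rename_out (hl : 4 ≤ ℓ) {p : G.Coloring (Fin 3)} {c d : G.Coloring (Fin ℓ)} {X Y Z : Fin 3}
    {x y z x' y' z' : Fin ℓ} (hd : Trip X Y Z) (h : Mono p c X Y Z x y z)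
    (h' : Mono p d X Y Z x' y' z')
    (hxy' : x' ≠ y') (hxz' : x' ≠ z') (hyz' : y' ≠ z') (hy : y ≠ x') (hz : z ≠ x') :
    Reach G ℓ (2 * Fintype.card V) c d := by
  obtain ⟨c1, m1, r1⟩ := Mono.move hd h x' hy hz
  have := rename_two hl hd m1 h' hy.symm hz.symm hxy' hxz' hyz'
  have hs := csize_sum p hd
  exact (r1.trans this).mono (by omega)

/-- case where `X` has to take the old colour of `Y`. -/
lemma rename_cyc (hl : 4 ≤ ℓ) {p : G.Coloring (Fin 3)} {c d : G.Coloring (Fin ℓ)} {X Y Z : Fin 3}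
    {x y z y' z' : Fin ℓ} (hd : Trip X Y Z) (h : Mono p c X Y Z x y z)
    (h' : Mono p d X Y Z y y' z')
    (hxy : x ≠ y) (hxz : x ≠ z) (hyz : y ≠ z)
    (hxy' : y ≠ y') (hxz' : y ≠ z') (hyz' : y' ≠ z') :
    Reach G ℓ (2 * Fintype.card V) c d := by
  by_cases h1 : z = y'
  · by_cases h2 : x = z'
    · subst h1 h2
      obtain ⟨f, hf1, hf2, hf3⟩ : ∃ f, x ≠ f ∧ y ≠ f ∧ z ≠ f := exists_free hl x y z
      obtain ⟨c1, m1, r1⟩ := Mono.move hd h f hf2 hf3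
      obtain ⟨c2, m2, r2⟩ := Mono.move hd.rot.rot m1.rot.rot x hf1.symm hxy.symm
      obtain ⟨c3, m3, r3⟩ := Mono.move hd.rot m2.rot.rot z hxz hf3.symm
      obtain ⟨c4, m4, r4⟩ := Mono.move hd m3.rot.rot y hyz.symm hxy
      have : c4 = d := Mono.unique hd m4 h'
      subst this
      have hs := csize_sum p hd
      exact (((r1.trans r2).trans r3).trans r4).mono (by omega)
    · exact rename_out hl hd.rot.rot h.rot.rot h'.rot.rot hxz'.symm hyz'.symm hxy'
        h2 hxz'
  · by_cases h2 : x = y'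
    · by_cases h3 : z = z'
      · subst h3
        have := rename_two hl hd.rot.rot h.rot.rot h'.rot.rot hxz.symm hyz.symm hyz.symm
          (Ne.symm hyz') hxy'
        have hs := csize_sum p hd
        exact this.mono (by omega)
      · refine rename_out hl hd.rot.rot h.rot.rot h'.rot.rot hxz'.symm hyz'.symm hxy' ?_ hxz'
        rw [h2]; exact hyz'
    · exact rename_out hl hd.rot h.rot h'.rot hyz' hxy'.symm hxz'.symm h1 h2

lemma rename (hl : 4 ≤ ℓ) {p : G.Coloring (Fin 3)} {c d : G.Coloring (Fin ℓ)} {X Y Z : Fin 3}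
    {x y z x' y' z' : Fin ℓ} (hd : Trip X Y Z) (h : Mono p c X Y Z x y z)
    (h' : Mono p d X Y Z x' y' z')
    (hxy : x ≠ y) (hxz : x ≠ z) (hyz : y ≠ z)
    (hxy' : x' ≠ y') (hxz' : x' ≠ z') (hyz' : y' ≠ z') :
    Reach G ℓ (2 * Fintype.card V) c d := by
  by_cases h1 : y = x'
  · subst h1
    exact rename_cyc hl hd h h' hxy hxz hyz hxy' hxz' hyz'
  · by_cases h2 : z = x'
    · subst h2
      exact rename_cyc hl hd.swap h.swap h'.swap hxz hxy hyz.symm hxz' hxy' hyz'.symm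
    · exact rename_out hl hd h h' hxy' hxz' hyz' h1 h2

def NE (p : G.Coloring (Fin 3)) (c : G.Coloring (Fin ℓ)) (X : Fin 3) (i : Fin ℓ) (Y : Fin 3)
    (j : Fin ℓ) : Prop :=
  ∀ u v, p u = X → c u = i → p v = Y → c v = j → ¬ G.Adj u v

lemma NE.symm {p : G.Coloring (Fin 3)} {c : G.Coloring (Fin ℓ)} {X Y : Fin 3} {i j : Fin ℓ}
    (h : NE p c X i Y j) : NE p c Y j X i :=
  fun u v hu hu' hv hv' huv => h v u hv hv' hu hu' huv.symm

lemma same_class (p : G.Coloring (Fin 3)) {u v : V} {X : Fin 3} (hu : p u = X) (hv : p v = X) :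
    ¬ G.Adj u v := fun h => p.valid h (hu.trans hv.symm)

lemma same_col (c : G.Coloring (Fin ℓ)) {u v : V} {i : Fin ℓ} (hu : c u = i) (hv : c v = i) :
    ¬ G.Adj u v := fun h => c.valid h (hu.trans hv.symm)

lemma chain (hG : TwoK2Free G) (p : G.Coloring (Fin 3)) (c : G.Coloring (Fin ℓ)) (X Y : Fin 3)
    (i j : Fin ℓ) : NE p c X i Y j ∨ NE p c X j Y i := by
  by_contra hcon
  simp only [NE, not_or, not_forall, not_not] at hcon
  obtain ⟨⟨u, v, h1, h2, h3, h4, h5⟩, ⟨u', v', k1, k2, k3, k4, k5⟩⟩ := hcon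
  exact hG ⟨u, v, u', v', h5, k5, same_class p h1 k1, same_col c h2 k4, same_col c h4 k2,
    same_class p h3 k3⟩

lemma chain3 (hG : TwoK2Free G) (p : G.Coloring (Fin 3)) (c : G.Coloring (Fin ℓ)) (X Y Z : Fin 3)
    (i j : Fin ℓ) (h : NE p c X i Z j) : NE p c X i Y j ∨ NE p c Z j Y i := by
  by_contra hcon
  simp only [NE, not_or, not_forall, not_not] at hcon
  obtain ⟨⟨u, v, h1, h2, h3, h4, h5⟩, ⟨u', v', k1, k2, k3, k4, k5⟩⟩ := hcon
  exact hG ⟨u, v, u', v', h5, k5, h u u' h1 h2 k1 k2, same_col c h2 k4, same_col c h4 k2,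
    same_class p h3 k3⟩

/-- colour `i` meets all classes -/
def Full (p : G.Coloring (Fin 3)) (c : G.Coloring (Fin ℓ)) (i : Fin ℓ) : Prop :=
  ∀ X, ∃ v, p v = X ∧ c v = i

/-- Moving `X_i` into colour `j`. -/
lemma movepart (p : G.Coloring (Fin 3)) (c : G.Coloring (Fin ℓ)) (X : Fin 3) {i j : Fin ℓ}
    (h : ∀ Y, Y ≠ X → NE p c X i Y j) :
    ∃ c' : G.Coloring (Fin ℓ), (∀ v, p v = X → c v = i → c' v = j) ∧
      (∀ v, ¬ (p v = X ∧ c v = i) → c' v = c v) ∧ Reach G ℓ (csize p X) c c' := by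
  obtain ⟨c', h1, h2, h3⟩ := setcol p c X (fun v => p v = X ∧ c v = i) (fun _ h => h.1) j (by
    intro u v hu huv hv
    have hvX : p v ≠ X := fun hv => p.valid huv (hu.1.trans hv.symm)
    exact h (p v) hvX u v hu.1 hu.2 rfl hv huv)
  exact ⟨c', fun v a b => h1 v ⟨a, b⟩, h2, h3⟩

lemma csize_le (p : G.Coloring (Fin 3)) (X : Fin 3) : csize p X ≤ Fintype.card V := by
  classical
  exact Finset.card_le_univ _

/-- effect of a part move on full colours -/
lemma movefull (p : G.Coloring (Fin 3)) (c : G.Coloring (Fin ℓ)) (X : Fin 3) {i j : Fin ℓ}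
    (hij : i ≠ j) (h : ∀ Y, Y ≠ X → NE p c X i Y j)
    (hj : Full p c j ∨ ∃ W, W ≠ X ∧ ∀ v, p v = W → c v ≠ j) :
    ∃ c' : G.Coloring (Fin ℓ), (∀ k, Full p c' k → Full p c k) ∧ ¬ Full p c' i ∧
      Reach G ℓ (Fintype.card V) c c' := by
  obtain ⟨c', h1, h2, h3⟩ := movepart p c X h
  refine ⟨c', ?_, ?_, h3.mono (csize_le p X)⟩
  · intro k hk
    by_cases hkj : k = j
    · subst hkj
      rcases hj with hj | ⟨W, hW, hW'⟩
      · exact hj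
      · obtain ⟨v, hv, hv'⟩ := hk W
        rw [h2 v (fun e => hW (hv.symm.trans e.1))] at hv'
        exact absurd hv' (hW' v hv)
    · intro Y
      obtain ⟨v, hv, hv'⟩ := hk Y
      refine ⟨v, hv, ?_⟩
      by_cases e : p v = X ∧ c v = i
      · rw [h1 v e.1 e.2] at hv'
        exact absurd hv'.symm hkj
      · rw [← h2 v e, hv']
  · intro hf
    obtain ⟨v, hv, hv'⟩ := hf X
    by_cases e : c v = i
    · rw [h1 v hv e] at hv'
      exact hij hv'.symm
    · rw [h2 v (fun h => e h.2)] at hv'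
      exact e hv'

lemma Trip.ofNe : ∀ W : Fin 3, ∃ X Y : Fin 3, Trip W X Y := by
  unfold Trip; decide

lemma step (hG : TwoK2Free G) (p : G.Coloring (Fin 3)) (c : G.Coloring (Fin ℓ)) {i j : Fin ℓ}
    (hij : i ≠ j) (hi : Full p c i) :
    ∃ c' : G.Coloring (Fin ℓ), (∀ k, Full p c' k → Full p c k) ∧
      ((¬ Full p c' i) ∨ (Full p c j ∧ ¬ Full p c' j)) ∧
      Reach G ℓ (Fintype.card V) c c' := by
  by_cases hj : Full p c j
  · have key : ∀ {i j : Fin ℓ}, i ≠ j → Full p c i → Full p c j → NE p c 0 i 1 j →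
        ∃ c' : G.Coloring (Fin ℓ), (∀ k, Full p c' k → Full p c k) ∧
          ((¬ Full p c' i) ∨ (¬ Full p c' j)) ∧ Reach G ℓ (Fintype.card V) c c' := by
      intro i j hij hi hj hne
      rcases chain3 hG p c 0 2 1 i j hne with h | h
      · obtain ⟨c', a, b, d⟩ := movefull p c 0 hij (by
          intro Y hY
          rcases (show Y = 0 ∨ Y = 1 ∨ Y = 2 by fin_cases Y <;> simp) with e | e | e
          · exact absurd e hY
          · rw [e]; exact hne
          · rw [e]; exact h) (Or.inl hj)
        exact ⟨c', a, Or.inl b, d⟩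
      · obtain ⟨c', a, b, d⟩ := movefull p c 1 hij.symm (by
          intro Y hY
          rcases (show Y = 0 ∨ Y = 1 ∨ Y = 2 by fin_cases Y <;> simp) with e | e | e
          · rw [e]; exact hne.symm
          · exact absurd e hY
          · rw [e]; exact h) (Or.inl hi)
        exact ⟨c', a, Or.inr b, d⟩
    rcases chain hG p c 0 1 i j with h | h
    · obtain ⟨c', a, b, d⟩ := key hij hi hj h
      exact ⟨c', a, b.imp id (fun b => ⟨hj, b⟩), d⟩
    · obtain ⟨c', a, b, d⟩ := key hij.symm hj hi h
      exact ⟨c', a, b.symm.imp id (fun b => ⟨hj, b⟩), d⟩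
  · have hj' := hj
    simp only [Full, not_forall, not_exists, not_and] at hj'
    obtain ⟨W, hW⟩ := hj'
    obtain ⟨X, Y, hd⟩ := Trip.ofNe W
    have key : ∀ {X Y : Fin 3}, Trip W X Y → NE p c X i Y j →
        ∃ c' : G.Coloring (Fin ℓ), (∀ k, Full p c' k → Full p c k) ∧
          ((¬ Full p c' i) ∨ (Full p c j ∧ ¬ Full p c' j)) ∧
          Reach G ℓ (Fintype.card V) c c' := by
      intro X Y hd hne
      obtain ⟨c', a, b, d⟩ := movefull p c X hij (by
          intro U hU
          rcases hd.cover U with e | e | e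
          · subst e
            intro u v _ _ hv hv'
            exact absurd hv' (hW v hv)
          · exact absurd e hU
          · rw [e]; exact hne) (Or.inr ⟨W, hd.1, hW⟩)
      exact ⟨c', a, Or.inl b, d⟩
    rcases chain hG p c X Y i j with h | h
    · exact key hd h
    · exact key hd.swap h.symm

open Classical in
lemma reduce (hG : TwoK2Free G) (p : G.Coloring (Fin 3)) (S : Finset (Fin ℓ)) (hS : S.card = 4)
    (m : ℕ) : ∀ c : G.Coloring (Fin ℓ), (S.filter (Full p c)).card ≤ m →
    ∃ c' : G.Coloring (Fin ℓ), (∀ k ∈ S, ¬ Full p c' k) ∧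
      Reach G ℓ (m * Fintype.card V) c c' := by
  induction m with
  | zero =>
    intro c hc
    refine ⟨c, fun k hk hf => ?_, Reach.refl _ _⟩
    have : S.filter (Full p c) = ∅ := Finset.card_eq_zero.mp (by omega)
    have hk' : k ∈ S.filter (Full p c) := Finset.mem_filter.mpr ⟨hk, hf⟩
    rw [this] at hk'
    simp at hk'
  | succ m ih =>
    intro c hc
    by_cases hex : ∃ i ∈ S, Full p c i
    · obtain ⟨i, hiS, hi⟩ := hex
      obtain ⟨j, hjS, hji⟩ : ∃ j ∈ S, j ≠ i := Finset.exists_mem_ne (by omega) i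
      obtain ⟨c1, a, b, r⟩ := step hG p c hji.symm hi
      have hlt : (S.filter (Full p c1)).card < (S.filter (Full p c)).card := by
        apply Finset.card_lt_card
        rw [Finset.ssubset_iff_of_subset]
        · rcases b with b | ⟨b1, b2⟩
          · exact ⟨i, Finset.mem_filter.mpr ⟨hiS, hi⟩, fun h => b (Finset.mem_filter.mp h).2⟩
          · exact ⟨j, Finset.mem_filter.mpr ⟨hjS, b1⟩, fun h => b2 (Finset.mem_filter.mp h).2⟩
        · intro k hk
          rw [Finset.mem_filter] at hk ⊢
          exact ⟨hk.1, a k hk.2⟩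
      obtain ⟨c2, h1, h2⟩ := ih c1 (by omega)
      exact ⟨c2, h1, (r.trans h2).mono (by rw [Nat.succ_mul]; omega)⟩
    · push Not at hex
      exact ⟨c, hex, Reach.refl _ _⟩

/-- recolour a whole class by a colour only used there -/
lemma fillclass (p : G.Coloring (Fin 3)) (c : G.Coloring (Fin ℓ)) (X : Fin 3) (j : Fin ℓ)
    (h : ∀ v, p v ≠ X → c v ≠ j) :
    ∃ c' : G.Coloring (Fin ℓ), (∀ v, p v = X → c' v = j) ∧ (∀ v, p v ≠ X → c' v = c v) ∧
      Reach G ℓ (csize p X) c c' :=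
  setcol p c X (fun v => p v = X) (fun _ h => h) j (by
    intro u v hu huv
    exact h v (fun hv => p.valid huv (hu.trans hv.symm)))

lemma finish_aux (hl : 4 ≤ ℓ) (p : G.Coloring (Fin 3)) (c : G.Coloring (Fin ℓ))
    {W X Y : Fin 3} (hd : Trip W X Y) {i j : Fin ℓ} (hij : i ≠ j)
    (hi : ∀ v, p v = W → c v ≠ i) (hj : ∀ v, p v = W → c v ≠ j) (hne : NE p c X i Y j) :
    ∃ (c' : G.Coloring (Fin ℓ)) (k : Fin ℓ), k ≠ j ∧ k ≠ i ∧ Mono p c' W X Y k j i ∧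
      Reach G ℓ (2 * Fintype.card V) c c' := by
  obtain ⟨c1, a1, b1, r1⟩ := movepart p c Y (i := j) (j := i) (by
    intro U hU
    rcases hd.cover U with e | e | e
    · subst e
      intro u v _ _ hv hv'
      exact absurd hv' (hi v hv)
    · rw [e]; exact hne.symm
    · exact absurd e hU)
  obtain ⟨c2, a2, b2, r2⟩ := fillclass p c1 X j (by
    intro v hv
    rcases hd.cover (p v) with e | e | e
    · rw [b1 v (fun h => hd.2.1 (e.symm.trans h.1))]
      exact hj v e
    · exact absurd e hv
    · by_cases hc : c v = j
      · rw [a1 v e hc]; exact hij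
      · rw [b1 v (fun h => hc h.2)]; exact hc)
  obtain ⟨c3, a3, b3, r3⟩ := fillclass p c2 Y i (by
    intro v hv
    rcases hd.cover (p v) with e | e | e
    · rw [b2 v (by rw [e]; exact hd.1), b1 v (fun h => hd.2.1 (e.symm.trans h.1))]
      exact hi v e
    · rw [a2 v e]; exact hij.symm
    · exact absurd e hv)
  obtain ⟨k, hk1, hk2, -⟩ := exists_free hl i j j
  obtain ⟨c4, a4, b4, r4⟩ := fillclass p c3 W k (by
    intro v hv
    rcases hd.cover (p v) with e | e | e
    · exact absurd e hv
    · rw [b3 v (by rw [e]; exact hd.2.2), a2 v e]; exact hk2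
    · rw [a3 v e]; exact hk1)
  refine ⟨c4, k, hk2.symm, hk1.symm, fun v => ⟨a4 v, fun e => ?_, fun e => ?_⟩, ?_⟩
  · rw [b4 v (by rw [e]; exact hd.1.symm), b3 v (by rw [e]; exact hd.2.2), a2 v e]
  · rw [b4 v (by rw [e]; exact hd.2.1.symm), a3 v e]
  · have hs := csize_sum p hd
    exact (((r1.trans r2).trans r3).trans r4).mono (by omega)

/-- constant on the classes with distinct colours -/
def Good (p : G.Coloring (Fin 3)) (c : G.Coloring (Fin ℓ)) : Prop :=
  ∃ g : Fin 3 → Fin ℓ, Function.Injective g ∧ ∀ v, c v = g (p v)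

lemma Mono.good {p : G.Coloring (Fin 3)} {c : G.Coloring (Fin ℓ)} {X Y Z : Fin 3}
    {x y z : Fin ℓ} (hd : Trip X Y Z) (h : Mono p c X Y Z x y z)
    (hxy : x ≠ y) (hxz : x ≠ z) (hyz : y ≠ z) : Good p c := by
  obtain ⟨d1, d2, d3⟩ := id hd
  refine ⟨fun W => if W = X then x else if W = Y then y else z, ?_, ?_⟩
  · intro U U' hU
    rcases hd.cover U with e | e | e <;> rcases hd.cover U' with e' | e' | e' <;>
      subst e <;> subst e' <;> simp_all [eq_comm]
  · intro v
    rcases hd.cover (p v) with e | e | e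
    · simp [(h v).1 e, e]
    · simp [(h v).2.1 e, e, d1.symm]
    · simp [(h v).2.2 e, e, d2.symm, d3.symm]

lemma to_good (hl : 4 ≤ ℓ) (hG : TwoK2Free G) (p : G.Coloring (Fin 3)) (c : G.Coloring (Fin ℓ)) :
    ∃ c' : G.Coloring (Fin ℓ), Good p c' ∧ Reach G ℓ (6 * Fintype.card V) c c' := by
  classical
  obtain ⟨S, -, hS⟩ := Finset.exists_subset_card_eq (s := (Finset.univ : Finset (Fin ℓ))) (n := 4)
    (by simpa using hl)
  obtain ⟨c1, h1, r1⟩ := reduce hG p S hS 4 c ((Finset.card_filter_le _ _).trans hS.le)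
  have h2 : ∀ k, ∃ W, k ∈ S → ∀ v, p v = W → c1 v ≠ k := by
    intro k
    by_cases hk : k ∈ S
    · have := h1 k hk
      simp only [Full, not_forall, not_exists, not_and] at this
      obtain ⟨W, hW⟩ := this
      exact ⟨W, fun _ => hW⟩
    · exact ⟨0, fun h => absurd h hk⟩
  choose f hf using h2
  obtain ⟨i, hi, j, hj, hij, he⟩ := Finset.exists_ne_map_eq_of_card_lt_of_maps_to
    (s := S) (t := (Finset.univ : Finset (Fin 3))) (f := f) (by simp [hS]) (by simp)
  have hi' := hf i hi
  have hj' := hf j hj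
  rw [← he] at hj'
  obtain ⟨X, Y, hd⟩ := Trip.ofNe (f i)
  rcases chain hG p c1 X Y i j with h | h
  · obtain ⟨c', k, k1, k2, m, r⟩ := finish_aux hl p c1 hd hij hi' hj' h
    exact ⟨c', m.good hd k1 k2 hij.symm, (r1.trans r).mono (by omega)⟩
  · obtain ⟨c', k, k1, k2, m, r⟩ := finish_aux hl p c1 hd hij.symm hj' hi' h
    exact ⟨c', m.good hd k1 k2 hij, (r1.trans r).mono (by omega)⟩

lemma all_reach (hl : 4 ≤ ℓ) (hG : TwoK2Free G) (p : G.Coloring (Fin 3))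
    (c d : G.Coloring (Fin ℓ)) : Reach G ℓ (14 * Fintype.card V) c d := by
  obtain ⟨c', ⟨g, hg, hc⟩, r⟩ := to_good hl hG p c
  obtain ⟨d', ⟨g', hg', hd⟩, r'⟩ := to_good hl hG p d
  have m : Mono p c' 0 1 2 (g 0) (g 1) (g 2) := fun v =>
    ⟨fun e => by rw [hc, e], fun e => by rw [hc, e], fun e => by rw [hc, e]⟩
  have m' : Mono p d' 0 1 2 (g' 0) (g' 1) (g' 2) := fun v =>
    ⟨fun e => by rw [hd, e], fun e => by rw [hd, e], fun e => by rw [hd, e]⟩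
  have := rename hl (by unfold Trip; decide) m m' (hg.ne (by decide)) (hg.ne (by decide))
    (hg.ne (by decide)) (hg'.ne (by decide)) (hg'.ne (by decide)) (hg'.ne (by decide))
  exact ((r.trans this).trans r'.symm).mono (by omega)

end Aux

/-- every 3-chromatic 2K₂-free graph is recolourable, with ℓ-recolouring
diameter at most `14n` for every `ℓ ≥ χ(G) + 1 = 4`. -/
theorem stmt2 {V : Type*} [Fintype V] (G : SimpleGraph V)
    (hchi : G.chromaticNumber = 3) (hG : TwoK2Free G) :
    ∀ ℓ : ℕ, 4 ≤ ℓ →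
      (recolGraph G ℓ).Connected ∧
      ∀ c₁ c₂ : G.Coloring (Fin ℓ),
        ∃ p : (recolGraph G ℓ).Walk c₁ c₂, p.length ≤ 14 * Fintype.card V := by
  intro ℓ hl
  have h3 : G.Colorable 3 := by
    rw [← SimpleGraph.chromaticNumber_le_iff_colorable, hchi]
    rfl
  obtain ⟨p⟩ := id h3
  have hall := fun c d => all_reach (ℓ := ℓ) hl hG p c d
  refine ⟨?_, hall⟩
  obtain ⟨c0⟩ := h3.mono (show 3 ≤ ℓ by omega)
  have : Nonempty (G.Coloring (Fin ℓ)) := ⟨c0⟩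
  refine ⟨fun c d => ?_⟩
  obtain ⟨q, -⟩ := hall c d
  exact ⟨q⟩
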